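/- Let X be a 2-dimensional real inner product (Hilbert) space and Y a 2-dimensional real normed space. Then there exists a bounded linear operator T : X → Y with ‖T‖ = 1 such that T(B_X) ⊆ B_Y and there are two linearly independent points y₁, y₂ ∈ T(B_X) ∩ S_Y and a functional y₁* ∈ S_{Y*} with y₁*(y₁) = 1 such that y₂ ∉ F(y₁*) ∪ F(−y₁*). -/

import Mathlib

/-!
Among the operators `T : X → Y` with `T(B_X) ⊆ B_Y`, take one for which the ellipsoid `T(B_X)` has
the largest volume. For a unit vector `e`, shrinking `X` by a factor `1 - t` along `e` costs only a
factor `1 - t` of volume, so maximality bounds the norm of the shrunken operator from below. Letting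
`t → 0` produces a unit vector `x` with `‖T x‖ = 1` and `dim X * ⟪e, x⟫ ^ 2 ≤ 1`, as in John's
theorem. If `T e` itself has norm one and is supported by the functional `f`, then `f ∘ T` has norm
one and attains it at `e`, so `f (T x) = ⟪e, x⟫`, whose absolute value is less than one as soon as
`dim X ≥ 2`. Larger spaces reduce to planes: precompose an operator defined on a plane of `X` with
the orthogonal projection onto that plane.
-/

open Filter Topology Module

open scoped RealInnerProductSpace

lemma mul_geom_sum_le_one {n : ℕ} {u w : ℝ} (hw : 0 < w) (h : 1 - w ≤ (1 - w * u) ^ n) :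
    u * ∑ i ∈ Finset.range n, (1 - w * u) ^ i ≤ 1 := by
  have hgeom := mul_neg_geom_sum (1 - w * u) n
  rw [sub_sub_cancel, mul_assoc] at hgeom
  exact le_of_mul_le_mul_left (by linarith) hw

section NormedSpace

variable {X Y : Type*} [NormedAddCommGroup X] [NormedSpace ℝ X]
  [NormedAddCommGroup Y] [NormedSpace ℝ Y]

lemma linearIndependent_pair_of_norm_eq_of_abs_apply_lt {y z : Y} {f : Dual ℝ Y}
    (hyz : ‖y‖ = ‖z‖) (hf : |f z| < |f y|) : LinearIndependent ℝ ![y, z] := by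
  have hy : y ≠ 0 := by
    rintro rfl
    exact (abs_nonneg (f z)).not_gt (by simpa using hf)
  rw [LinearIndependent.pair_iff' hy]
  rintro a rfl
  have ha : |a| = 1 := by simpa [norm_smul, hy] using hyz
  simp [abs_mul, ha] at hf

lemma exists_norm_eq_one_and_norm_apply_eq [FiniteDimensional ℝ X] [Nontrivial X]
    (T : X →L[ℝ] Y) : ∃ x, ‖x‖ = 1 ∧ ‖T x‖ = ‖T‖ := by
  obtain ⟨x, hx, hTx⟩ := (isCompact_sphere (0 : X) 1).exists_sSup_image_eq
    (NormedSpace.sphere_nonempty.2 zero_le_one) (f := fun x ↦ ‖T x‖) (by fun_prop)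
  exact ⟨x, mem_sphere_zero_iff_norm.1 hx, hTx.symm.trans T.sSup_sphere_eq_norm⟩

end NormedSpace

section LargestVolume

variable {X Y : Type*} [NormedAddCommGroup X] [NormedSpace ℝ X]
  [NormedAddCommGroup Y] [NormedSpace ℝ Y] {T : X →L[ℝ] Y}

/-- `T` maps the unit ball into the unit ball, and its image of the unit ball has the largest volume
among the sets `T (A B_X)`, with `A` an endomorphism of `X`, contained in the unit ball. Volumes
are compared through `|det A|`, which needs no measure on `Y`. -/
def HasMaximalVolume (T : X →L[ℝ] Y) : Prop :=
  ‖T‖ ≤ 1 ∧ ∀ A : X →L[ℝ] X, ‖T ∘L A‖ ≤ 1 → |A.det| ≤ 1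

lemma isCompact_setOf_norm_comp_le [FiniteDimensional ℝ X] {W : Type*}
    [NormedAddCommGroup W] [NormedSpace ℝ W] [FiniteDimensional ℝ W] {J : X →L[ℝ] Y}
    (hJ : Function.Injective J) (r : ℝ) : IsCompact {A : W →L[ℝ] X | ‖J ∘L A‖ ≤ r} := by
  have : ProperSpace (W →L[ℝ] X) := FiniteDimensional.proper ℝ _
  let postcomp := ContinuousLinearMap.compL ℝ W X Y J
  have hker : postcomp.ker = ⊥ := LinearMap.ker_eq_bot.2 fun A B hAB ↦
    ContinuousLinearMap.ext fun x ↦ hJ (DFunLike.congr_fun hAB x)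
  obtain ⟨K, -, hK⟩ := LinearMap.exists_antilipschitzWith postcomp.toLinearMap hker
  have hpre : {A : W →L[ℝ] X | ‖J ∘L A‖ ≤ r} = postcomp ⁻¹' Metric.closedBall 0 r := by
    ext A; simp [postcomp]
  rw [hpre]
  exact Metric.isCompact_of_isClosed_isBounded
    (Metric.isClosed_closedBall.preimage postcomp.continuous)
    (hK.isBounded_preimage Metric.isBounded_closedBall)

lemma abs_det_smul (c : ℝ) (A : X →L[ℝ] X) :
    |(c • A).det| = |c| ^ finrank ℝ X * |A.det| := by
  rw [ContinuousLinearMap.det, ContinuousLinearMap.toLinearMap_smul, LinearMap.det_smul,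
    abs_mul, abs_pow]

lemma exists_hasMaximalVolume [FiniteDimensional ℝ X] {J : X →L[ℝ] Y}
    (hJ : Function.Injective J) : ∃ T : X →L[ℝ] Y, HasMaximalVolume T := by
  obtain ⟨A, hA, hmax⟩ := (isCompact_setOf_norm_comp_le hJ 1).exists_isMaxOn ⟨0, by simp⟩
    (f := fun A ↦ |A.det|) ContinuousLinearMap.continuous_det.abs.continuousOn
  have hpos : 0 < |A.det| := by
    let c : ℝ := (‖J‖ + 1)⁻¹
    have hc : 0 < c := by positivity
    have hcJ : ‖J ∘L (c • .id ℝ X)‖ ≤ 1 := by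
      rw [ContinuousLinearMap.comp_smul, ContinuousLinearMap.comp_id, norm_smul,
        Real.norm_of_nonneg hc.le]
      exact (inv_mul_le_one₀ (by positivity)).2 (by linarith)
    calc
      0 < |(c • ContinuousLinearMap.id ℝ X).det| := by
        rw [abs_det_smul]
        simp [ContinuousLinearMap.det, hc.ne']
      _ ≤ |A.det| := hmax hcJ
  refine ⟨J ∘L A, hA, fun B hB ↦ ?_⟩
  have hAB : |(A ∘L B).det| ≤ |A.det| := hmax hB
  rw [ContinuousLinearMap.det, ContinuousLinearMap.toLinearMap_comp, LinearMap.det_comp,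
    abs_mul] at hAB
  exact le_of_mul_le_mul_left (by simpa using hAB) hpos

lemma HasMaximalVolume.abs_det_le_norm_comp_pow (hT : HasMaximalVolume T) (A : X →L[ℝ] X) :
    |A.det| ≤ ‖T ∘L A‖ ^ finrank ℝ X := by
  have hr : ∀ r ∈ Set.Ioi ‖T ∘L A‖, |A.det| ≤ r ^ finrank ℝ X := fun r hr ↦ by
    have hr₀ : 0 < r := (norm_nonneg _).trans_lt hr
    have hdet := hT.2 (r⁻¹ • A) (by
      rw [ContinuousLinearMap.comp_smul, norm_smul, norm_inv, Real.norm_of_nonneg hr₀.le]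
      exact (inv_mul_le_one₀ hr₀).2 (Set.mem_Ioi.1 hr).le)
    rwa [abs_det_smul, abs_inv, abs_of_pos hr₀, inv_pow, inv_mul_le_one₀ (by positivity)] at hdet
  exact ge_of_tendsto (((continuous_pow _).tendsto _).mono_left nhdsWithin_le_nhds)
    (eventually_mem_nhdsWithin.mono hr)

lemma HasMaximalVolume.norm_eq_one [Nontrivial X] [FiniteDimensional ℝ X]
    (hT : HasMaximalVolume T) : ‖T‖ = 1 := by
  have hpow : 1 ≤ ‖T‖ ^ finrank ℝ X := by
    simpa [ContinuousLinearMap.det] using hT.abs_det_le_norm_comp_pow (.id ℝ X)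
  exact hT.1.antisymm <| (one_le_pow_iff_of_nonneg (norm_nonneg T) finrank_pos.ne').1 hpow

end LargestVolume

section InnerProduct

variable {X : Type*} [NormedAddCommGroup X] [InnerProductSpace ℝ X]

/-- The linear map acting as multiplication by `1 - t` on the line of the unit vector `e` and as the
identity on its orthogonal complement. -/
noncomputable def shrinkAlong (e : X) (t : ℝ) : X →L[ℝ] X :=
  .id ℝ X - t • (innerSL ℝ e).smulRight e

lemma shrinkAlong_apply (e : X) (t : ℝ) (x : X) : shrinkAlong e t x = x - (t * ⟪e, x⟫) • e := by
  simp [shrinkAlong, mul_smul]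

lemma det_shrinkAlong [FiniteDimensional ℝ X] {e : X} (he : ‖e‖ = 1) (t : ℝ) :
    (shrinkAlong e t).det = 1 - t := by
  have htransvection : (shrinkAlong e t : X →ₗ[ℝ] X) =
      LinearMap.transvection ((-t) • (innerSL ℝ e : X →L[ℝ] ℝ).toLinearMap) e := by
    ext x
    simp [shrinkAlong_apply, LinearMap.transvection.apply, sub_eq_add_neg]
  rw [ContinuousLinearMap.det, htransvection, LinearMap.transvection.det]
  simp [he, sub_eq_add_neg]

lemma norm_shrinkAlong_apply_sq {e : X} (he : ‖e‖ = 1) (t : ℝ) (x : X) :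
    ‖shrinkAlong e t x‖ ^ 2 = ‖x‖ ^ 2 - (1 - (1 - t) ^ 2) * ⟪e, x⟫ ^ 2 := by
  rw [shrinkAlong_apply, norm_sub_sq_real, norm_smul, inner_smul_right, real_inner_comm, he,
    Real.norm_eq_abs, mul_one, sq_abs]
  ring

lemma apply_eq_inner_of_norm_le_one {f : X →L[ℝ] ℝ} (hf : ‖f‖ ≤ 1) {e : X} (he : ‖e‖ = 1)
    (hfe : f e = 1) (x : X) : f x = ⟪e, x⟫ := by
  -- The quadratic form `‖v‖ ^ 2 - f v ^ 2` is nonnegative and vanishes at `e`, so it is affine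
  -- along the line `x + ℝ e`, with slope `2 * (⟪e, x⟫ - f x)`.
  have hline : ∀ s : ℝ, 0 ≤ ‖x‖ ^ 2 - f x ^ 2 + s * (2 * (⟪e, x⟫ - f x)) := fun s ↦ by
    have hle : |f (x + s • e)| ≤ ‖x + s • e‖ := by
      simpa using f.le_of_opNorm_le hf (x + s • e)
    have hsq := sq_le_sq' (neg_le_of_abs_le hle) (le_of_abs_le hle)
    rw [norm_add_sq_real, map_add, map_smul, hfe, norm_smul, inner_smul_right, real_inner_comm, he,
      mul_one, Real.norm_eq_abs, sq_abs, smul_eq_mul] at hsq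
    linarith
  by_contra hne
  have hslope : 2 * (⟪e, x⟫ - f x) ≠ 0 := mul_ne_zero two_ne_zero (sub_ne_zero.2 (Ne.symm hne))
  have hneg := hline (-(‖x‖ ^ 2 - f x ^ 2 + 1) / (2 * (⟪e, x⟫ - f x)))
  rw [div_mul_cancel₀ _ hslope] at hneg
  linarith

end InnerProduct

section ContactPoints

variable {X Y : Type*} [NormedAddCommGroup X] [InnerProductSpace ℝ X]
  [NormedAddCommGroup Y] [NormedSpace ℝ Y] {T : X →L[ℝ] Y} {e : X}

-- With `n = finrank ℝ X`, the last inequality is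
-- `(1 - t) ^ 2 ≤ (1 - (1 - (1 - t) ^ 2) * ⟪e, x⟫ ^ 2) ^ n` divided by
-- `1 - (1 - t) ^ 2`, so that it keeps its content in the limit `t → 0`.
lemma HasMaximalVolume.exists_norm_shrinkAlong_ge [FiniteDimensional ℝ X]
    (hT : HasMaximalVolume T) (he : ‖e‖ = 1) {t : ℝ} (ht₀ : 0 < t) (ht₁ : t ≤ 1) :
    ∃ x, ‖x‖ = 1 ∧ 1 - t ≤ ‖T (shrinkAlong e t x)‖ ^ finrank ℝ X ∧
      ⟪e, x⟫ ^ 2 * ∑ i ∈ Finset.range (finrank ℝ X), (1 - (1 - (1 - t) ^ 2) * ⟪e, x⟫ ^ 2) ^ i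
        ≤ 1 := by
  have : Nontrivial X := ⟨e, 0, norm_ne_zero_iff.1 (he ▸ one_ne_zero)⟩
  obtain ⟨x, hx, hTx⟩ := exists_norm_eq_one_and_norm_apply_eq (T ∘L shrinkAlong e t)
  have hdet : 1 - t ≤ ‖T (shrinkAlong e t x)‖ ^ finrank ℝ X := by
    have h := hT.abs_det_le_norm_comp_pow (shrinkAlong e t)
    rw [det_shrinkAlong he, ← hTx] at h
    exact (le_abs_self _).trans h
  refine ⟨x, hx, hdet, ?_⟩
  set u := ⟪e, x⟫ ^ 2
  set w := 1 - (1 - t) ^ 2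
  have hnorm : ‖T (shrinkAlong e t x)‖ ^ 2 ≤ 1 - w * u := by
    rw [← one_pow (M := ℝ) 2, ← hx, ← norm_shrinkAlong_apply_sq he]
    gcongr
    simpa using T.le_of_opNorm_le hT.1 (shrinkAlong e t x)
  have hw : 0 < w := sub_pos.2 (pow_lt_one₀ (by linarith) (by linarith) two_ne_zero)
  refine mul_geom_sum_le_one hw ?_
  calc
    1 - w = (1 - t) ^ 2 := sub_sub_cancel _ _
    _ ≤ (‖T (shrinkAlong e t x)‖ ^ finrank ℝ X) ^ 2 := by gcongr
    _ = (‖T (shrinkAlong e t x)‖ ^ 2) ^ finrank ℝ X := pow_right_comm ..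
    _ ≤ (1 - w * u) ^ finrank ℝ X := by gcongr

lemma HasMaximalVolume.exists_finrank_mul_inner_sq_le_one [FiniteDimensional ℝ X]
    (hT : HasMaximalVolume T) (he : ‖e‖ = 1) :
    ∃ x, ‖x‖ = 1 ∧ ‖T x‖ = 1 ∧ finrank ℝ X * ⟪e, x⟫ ^ 2 ≤ 1 := by
  have : Nontrivial X := ⟨e, 0, norm_ne_zero_iff.1 (he ▸ one_ne_zero)⟩
  let t : ℕ → ℝ := fun k ↦ 1 / (k + 1)
  choose x hx hTx hex using fun k ↦ hT.exists_norm_shrinkAlong_ge he (t := t k)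
    Nat.one_div_pos_of_nat (by simpa [t] using Nat.cast_inv_le_one (k + 1))
  obtain ⟨y, hy, φ, hφ, hlim⟩ := (isCompact_sphere (0 : X) 1).tendsto_subseq
    fun k ↦ mem_sphere_zero_iff_norm.2 (hx k)
  have hpair : Tendsto (fun k ↦ (t (φ k), x (φ k))) atTop (𝓝 (0, y)) :=
    (tendsto_one_div_add_atTop_nhds_zero_nat.comp hφ.tendsto_atTop).prodMk_nhds hlim
  have hnorm : ‖y‖ = 1 := mem_sphere_zero_iff_norm.1 hy
  let C : Set (ℝ × X) := {p | 1 - p.1 ≤ ‖T (shrinkAlong e p.1 p.2)‖ ^ finrank ℝ X ∧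
    ⟪e, p.2⟫ ^ 2 * ∑ i ∈ Finset.range (finrank ℝ X),
      (1 - (1 - (1 - p.1) ^ 2) * ⟪e, p.2⟫ ^ 2) ^ i ≤ 1}
  have hC : IsClosed C := by
    simp only [C, shrinkAlong_apply]
    refine (isClosed_le ?_ ?_).and (isClosed_le ?_ ?_) <;> fun_prop
  obtain ⟨hTy, hey⟩ : (0, y) ∈ C :=
    hC.mem_of_tendsto hpair (.of_forall fun k ↦ ⟨hTx (φ k), hex (φ k)⟩)
  refine ⟨y, hnorm, le_antisymm (by simpa [hnorm] using T.le_of_opNorm_le hT.1 y) ?_, ?_⟩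
  · rw [sub_zero, one_le_pow_iff_of_nonneg (norm_nonneg _) finrank_pos.ne'] at hTy
    simpa [shrinkAlong_apply] using hTy
  · simpa [mul_comm] using hey

lemma HasMaximalVolume.exists_contact_pair (hT : HasMaximalVolume T)
    (hX : 2 ≤ finrank ℝ X) :
    ∃ e x, ‖e‖ = 1 ∧ ‖T e‖ = 1 ∧ ‖x‖ = 1 ∧ ‖T x‖ = 1 ∧ |⟪e, x⟫| < 1 := by
  have : FiniteDimensional ℝ X := finite_of_finrank_pos (by lia)
  have : Nontrivial X := nontrivial_of_finrank_pos (R := ℝ) (by lia)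
  obtain ⟨e, he, hTe⟩ := exists_norm_eq_one_and_norm_apply_eq T
  obtain ⟨x, hx, hTx, hex⟩ := hT.exists_finrank_mul_inner_sq_le_one he
  refine ⟨e, x, he, hTe.trans hT.norm_eq_one, hx, hTx, (sq_lt_one_iff_abs_lt_one _).1 ?_⟩
  have hX' : (2 : ℝ) ≤ finrank ℝ X := mod_cast hX
  nlinarith [sq_nonneg ⟪e, x⟫]

lemma exists_contact_pair_of_two_le_rank (hX : 2 ≤ Module.rank ℝ X) (hY : 2 ≤ Module.rank ℝ Y) :
    ∃ (T : X →L[ℝ] Y) (e x : X),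
      ‖T‖ ≤ 1 ∧ ‖e‖ = 1 ∧ ‖T e‖ = 1 ∧ ‖x‖ = 1 ∧ ‖T x‖ = 1 ∧ |⟪e, x⟫| < 1 := by
  obtain ⟨f, hf⟩ := Module.le_rank_iff_exists_linearMap.1 hX
  obtain ⟨g, hg⟩ := Module.le_rank_iff_exists_linearMap.1 hY
  let V := LinearMap.range f
  let J : V →L[ℝ] Y := (g ∘ₗ (LinearEquiv.ofInjective f hf).symm).toContinuousLinearMap
  have hJ : Function.Injective J := hg.comp (LinearEquiv.injective _)
  have hV : finrank ℝ V = 2 := by simp [V, LinearMap.finrank_range_of_inj hf]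
  obtain ⟨T, hT⟩ := exists_hasMaximalVolume hJ
  obtain ⟨e, x, he, hTe, hx, hTx, hex⟩ := hT.exists_contact_pair hV.ge
  refine ⟨T ∘L V.orthogonalProjectionOnto, e, x, ?_, he, by simpa, hx, by simpa, hex⟩
  exact (T.opNorm_comp_le _).trans
    (mul_le_one₀ hT.1 (norm_nonneg _) V.orthogonalProjectionOnto_norm_le)

end ContactPoints

theorem hilbert_case_two_contact_points_general
    {X Y : Type*} [NormedAddCommGroup X] [InnerProductSpace ℝ X]
    [NormedAddCommGroup Y] [NormedSpace ℝ Y]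
    (hX : 2 ≤ Module.rank ℝ X) (hY : 2 ≤ Module.rank ℝ Y) :
    ∃ T : X →L[ℝ] Y, ‖T‖ = 1 ∧
      T '' Metric.closedBall 0 1 ⊆ Metric.closedBall 0 1 ∧
      ∃ y₁ y₂ : Y,
        y₁ ∈ T '' Metric.closedBall 0 1 ∩ Metric.sphere 0 1 ∧
        y₂ ∈ T '' Metric.closedBall 0 1 ∩ Metric.sphere 0 1 ∧
        LinearIndependent ℝ ![y₁, y₂] ∧
        ∃ y₁' : Y →L[ℝ] ℝ, ‖y₁'‖ = 1 ∧ y₁' y₁ = 1 ∧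
          y₂ ∉ ({y : Y | ‖y‖ = 1 ∧ y₁' y = 1} ∪ {y : Y | ‖y‖ = 1 ∧ y₁' y = -1}) := by
  obtain ⟨T, e, x, hT, he, hTe, hx, hTx, hex⟩ := exists_contact_pair_of_two_le_rank hX hY
  have hle : ∀ v, ‖T v‖ ≤ ‖v‖ := fun v ↦ by simpa using T.le_of_opNorm_le hT v
  have hT_norm : ‖T‖ = 1 := hT.antisymm (by simpa [hTe, he] using T.le_opNorm e)
  obtain ⟨f, hf, hfe⟩ := exists_dual_vector ℝ (T e) (hTe ▸ one_ne_zero)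
  replace hfe : f (T e) = 1 := by simpa [hTe] using hfe
  have hfT : ‖f ∘L T‖ ≤ 1 := by simpa [hf, hT_norm] using f.opNorm_comp_le T
  have hfx : |f (T x)| < 1 := by
    rwa [← apply_eq_inner_of_norm_le_one hfT he hfe x] at hex
  refine ⟨T, hT_norm, ?_, T e, T x, ⟨⟨e, by simp [he], rfl⟩, by simpa⟩,
    ⟨⟨x, by simp [hx], rfl⟩, by simpa⟩,
    linearIndependent_pair_of_norm_eq_of_abs_apply_lt (f := f) (hTe.trans hTx.symm)
      (by simpa [hfe]), f, hf, hfe, ?_⟩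
  · rintro _ ⟨v, hv, rfl⟩
    simpa using (hle v).trans (mem_closedBall_zero_iff.1 hv)
  · rintro (⟨-, h⟩ | ⟨-, h⟩) <;> simp [h] at hfx

/-- If `X` is a 2-dimensional real Hilbert space and `Y` a 2-dimensional real normed
space, then there is a norm-one operator `T : X → Y` with `T(B_X) ⊆ B_Y`, two
linearly independent points `y₁, y₂ ∈ T(B_X) ∩ S_Y`, and `y₁' ∈ S_{Y*}` with
`y₁'(y₁) = 1` such that `y₂ ∉ F(y₁') ∪ F(-y₁')`. -/
theorem hilbert_case_two_contact_points
    {X Y : Type*} [NormedAddCommGroup X] [InnerProductSpace ℝ X]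
    [NormedAddCommGroup Y] [NormedSpace ℝ Y]
    (hX : Module.finrank ℝ X = 2) (hY : Module.finrank ℝ Y = 2) :
    ∃ T : X →L[ℝ] Y, ‖T‖ = 1 ∧
      T '' Metric.closedBall 0 1 ⊆ Metric.closedBall 0 1 ∧
      ∃ y₁ y₂ : Y,
        y₁ ∈ T '' Metric.closedBall 0 1 ∩ Metric.sphere 0 1 ∧
        y₂ ∈ T '' Metric.closedBall 0 1 ∩ Metric.sphere 0 1 ∧
        LinearIndependent ℝ ![y₁, y₂] ∧
        ∃ y₁' : Y →L[ℝ] ℝ, ‖y₁'‖ = 1 ∧ y₁' y₁ = 1 ∧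
          y₂ ∉ ({y : Y | ‖y‖ = 1 ∧ y₁' y = 1} ∪ {y : Y | ‖y‖ = 1 ∧ y₁' y = -1}) := by
  exact hilbert_case_two_contact_points_general
    (rank_eq_ofNat_iff_finrank_eq_ofNat 2 |>.2 hX).ge
    (rank_eq_ofNat_iff_finrank_eq_ofNat 2 |>.2 hY).ge
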